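/- Let G be a finite loopless digraph, let S be a knot-free vertex deletion set of G, and let Z be the set of sinks of G−S. If there exists s ∈ S with s ∉ N⁺(Z), then S ∖ {s} is also a knot-free vertex deletion set of G. -/

import Mathlib

/-!
Every nonempty set `A` closed under out-neighbors in a finite knot-free digraph contains a vertex
with no out-neighbor but possibly itself: a minimal nonempty closed subset of `A` is strongly
connected, so it is a knot unless it is a single vertex (`exists_sink_of_closed`).

Let `Q` be a knot of `G − (S ∖ {s})`. Then `Q ∖ S` is nonempty, because `Q` has at least two
vertices and meets `S` at most in `s`, and it is closed under out-neighbors in the knot-free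
digraph `G − S`. Hence it contains a sink `z` of `G − S`. Since `z` lies on a knot of
`G − (S ∖ {s})`, it has an out-neighbor there, which can only be `s`; so `s ∈ N⁺(Z)`.
-/

open Relation

variable {V : Type*}

/-- Arc relation of the induced subdigraph of the digraph `E` on vertex set `X`. -/
def Restrict (E : V → V → Prop) (X : Set V) : V → V → Prop :=
  fun a b => a ∈ X ∧ b ∈ X ∧ E a b

/-- `Q` is a knot of the digraph with arc relation `E`: `Q` has at least two vertices,
`Q` induces a strongly connected subdigraph (any vertex of `Q` reaches any other by a
directed path inside `Q`), and no arc of `E` leaves `Q`. -/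
def IsKnot (E : V → V → Prop) (Q : Set V) : Prop :=
  Q.Nontrivial ∧
  (∀ u ∈ Q, ∀ v ∈ Q, ReflTransGen (Restrict E Q) u v) ∧
  (∀ u ∈ Q, ∀ v, E u v → v ∈ Q)

/-- The digraph `E` contains no knot. -/
def KnotFree (E : V → V → Prop) : Prop := ∀ Q : Set V, ¬ IsKnot E Q

/-- `S` is a knot-free vertex deletion set of the digraph `E`: `G − S` is knot-free. -/
def IsKFVD (E : V → V → Prop) (S : Set V) : Prop := KnotFree (Restrict E Sᶜ)

/-- `S` is a knot-free vertex deletion set of the induced subdigraph `E[X]`: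
`S ⊆ X` and `E[X] − S` is knot-free. -/
def IsKFVDOn (E : V → V → Prop) (X S : Set V) : Prop :=
  S ⊆ X ∧ KnotFree (Restrict E (X \ S))

/-- The set of sinks of the induced subdigraph `E[X]`: vertices of `X` with no
out-neighbor inside `X`. -/
def Sinks (E : V → V → Prop) (X : Set V) : Set V :=
  {v | v ∈ X ∧ ∀ w ∈ X, ¬ E v w}

/-- Out-neighborhood of a set `C` of vertices: `N⁺(C) = (⋃ v ∈ C, N⁺(v)) \ C`. -/
def NOut (E : V → V → Prop) (C : Set V) : Set V :=
  {w | ∃ v ∈ C, E v w} \ C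

/-- The induced subdigraph `E[X]` contains a directed cycle. -/
def HasCycleIn (E : V → V → Prop) (X : Set V) : Prop :=
  ∃ v w, Restrict E X v w ∧ ReflTransGen (Restrict E X) w v

/-- `U` is (the vertex set of) a strongly connected component of the digraph `E`:
a maximal nonempty set of mutually reachable vertices. -/
def IsSCC (E : V → V → Prop) (U : Set V) : Prop :=
  U.Nonempty ∧
  (∀ u ∈ U, ∀ v ∈ U, ReflTransGen E u v) ∧
  (∀ w, (∀ u ∈ U, ReflTransGen E u w ∧ ReflTransGen E w u) → w ∈ U)

/-- In a knot, every vertex has an out-neighbor (and, the knot being closed, inside the knot). -/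
lemma IsKnot.exists_out {V : Type*} {r : V → V → Prop} {Q : Set V} (hQ : IsKnot r Q)
    {u : V} (hu : u ∈ Q) : ∃ w ∈ Q, r u w := by
  obtain ⟨v, hv, hvu⟩ := hQ.1.exists_ne u
  rcases ReflTransGen.cases_head (hQ.2.1 u hu v hv) with h | ⟨w, h, -⟩
  · exact absurd h.symm hvu
  · exact ⟨w, h.2.1, h.2.2⟩

/-- In a finite knot-free digraph, a nonempty set closed under out-neighbors contains a vertex
whose only possible out-neighbor is itself. -/
lemma exists_sink_of_closed {V : Type*} [Finite V] {r : V → V → Prop} (hr : KnotFree r)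
    {A : Set V} (hne : A.Nonempty) (hA : ∀ u ∈ A, ∀ v, r u v → v ∈ A) :
    ∃ z ∈ A, ∀ w, r z w → w = z := by
  obtain ⟨Q, hQA, hQ⟩ := exists_minimal_le_of_wellFoundedLT
    (fun B : Set V => B.Nonempty ∧ ∀ u ∈ B, ∀ v, r u v → v ∈ B) A ⟨hne, hA⟩
  obtain ⟨⟨⟨z, hz⟩, hcl⟩, hmin⟩ := hQ
  refine ⟨z, hQA hz, fun w hw => ?_⟩
  by_contra hwz
  refine hr Q ⟨⟨z, hz, w, hcl z hz w hw, Ne.symm hwz⟩, fun u hu v hv => ?_, hcl⟩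
  -- The set reached from `u` inside `Q` is nonempty and closed, so by minimality it is all of `Q`.
  have hreach : Q ≤ {x | x ∈ Q ∧ ReflTransGen (Restrict r Q) u x} := by
    refine hmin ⟨⟨u, hu, .refl⟩, fun x hx y hxy => ?_⟩ fun x hx => hx.1
    have hy : y ∈ Q := hcl x hx.1 y hxy
    exact ⟨hy, hx.2.tail ⟨hx.1, hy, hxy⟩⟩
  exact (hreach hv).2

/-- If `s ∈ S` is not an out-neighbor of the set `Z` of sinks of `G − S`, then
`S ∖ {s}` is also a knot-free vertex deletion set. -/
theorem re_add_vertex_not_out_neighbor_of_sinks {V : Type*} [Fintype V]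
    (E : V → V → Prop) (hloopless : ∀ v, ¬ E v v)
    (S : Set V) (hS : IsKFVD E S) (s : V) (hs : s ∈ S)
    (hnot : s ∉ NOut E (Sinks E Sᶜ)) :
    IsKFVD E (S \ {s}) := by
  intro Q hQ
  have hmem : ∀ u, u ∈ (S \ {s})ᶜ → u ≠ s → u ∈ Sᶜ := fun u hu hus huS => hu ⟨huS, hus⟩
  have hcompl : ∀ u, u ∈ Sᶜ → u ∈ (S \ {s})ᶜ := fun u hu h => hu h.1
  have hne : (Q ∩ Sᶜ).Nonempty := by
    obtain ⟨v, hv, hvs⟩ := hQ.1.exists_ne s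
    obtain ⟨w, -, hw⟩ := hQ.exists_out hv
    exact ⟨v, hv, hmem v hw.1 hvs⟩
  obtain ⟨z, ⟨hzQ, hzS⟩, hz⟩ := exists_sink_of_closed hS hne fun u hu v huv =>
    ⟨hQ.2.2 u hu.1 v ⟨hcompl u huv.1, hcompl v huv.2.1, huv.2.2⟩, huv.2.1⟩
  have hsink : z ∈ Sinks E Sᶜ := by
    refine ⟨hzS, fun w hw hzw => ?_⟩
    obtain rfl := hz w ⟨hzS, hw, hzw⟩
    exact hloopless w hzw
  obtain ⟨w, -, hw⟩ := hQ.exists_out hzQ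
  have hws : w = s := by
    by_contra hws
    exact hsink.2 w (hmem w hw.2.1 hws) hw.2.2
  subst hws
  exact hnot ⟨⟨z, hsink, hw.2.2⟩, fun h => h.1 hs⟩
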